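/- Under Assumptions A1 and A2, for every measurable g : X → ℝ with ‖ḡ‖_{V^{1/2}} < ∞ and every n ≥ 1, Var_π(S_n) ≤ 5·n·c^{1/2}·ρ^{−1/2}·(log(1/ρ))^{−1}·π(V)^{3/2}·‖ḡ‖_{V^{1/2}}². -/

import Mathlib

open MeasureTheory ProbabilityTheory Finset
open scoped ENNReal Classical

noncomputable section

/-- `n`-th iterate of a Markov kernel. -/
def kIter {Y : Type*} [MeasurableSpace Y] (Q : ProbabilityTheory.Kernel Y Y) :
    ℕ → ProbabilityTheory.Kernel Y Y
  | 0 => ProbabilityTheory.Kernel.id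
  | n + 1 => (kIter Q n).comp Q

/-- `U`-weighted total variation distance between two finite measures:
`∫ U d|μ - ν|`, via the Jordan decomposition of `μ - ν`. -/
def wTV {Y : Type*} [MeasurableSpace Y] (U : Y → ℝ) (μ ν : Measure Y) : ℝ :=
  (∫ x, U x ∂(μ - ν)) + ∫ x, U x ∂(ν - μ)

/-- `U`-weighted sup norm `‖g‖_U = sup_x |g x| / U x`. -/
def vnorm {Y : Type*} (U : Y → ℝ) (g : Y → ℝ) : ℝ := ⨆ x, |g x| / U x

/-- Membership in the class `L_U`: measurable with finite `U`-weighted sup norm. -/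
structure MemL {Y : Type*} [MeasurableSpace Y] (U : Y → ℝ) (g : Y → ℝ) : Prop where
  meas : Measurable g
  bdd : BddAbove (Set.range fun x => |g x| / U x)

/-- `(Xs n)` is a Markov chain with initial distribution `ξ` and Markov kernel `Q`:
the law of `Xs 0` is `ξ` and, conditionally on the past up to time `n`, the
distribution of `Xs (n+1)` is `Q (Xs n)`. -/
structure IsMarkovChain {X : Type*} [MeasurableSpace X] {Ω : Type*} [MeasurableSpace Ω]
    (P : Measure Ω) (Xs : ℕ → Ω → X) (ξ : Measure X)
    (Q : ProbabilityTheory.Kernel X X) : Prop where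
  meas : ∀ n, Measurable (Xs n)
  init : P.map (Xs 0) = ξ
  markov : ∀ (n : ℕ) (f : X → ℝ), Measurable f → (∀ x, |f x| ≤ 1) →
    (P[fun ω => f (Xs (n + 1) ω) |
        ⨆ i ∈ Finset.range (n + 1), MeasurableSpace.comap (Xs i) inferInstance])
      =ᵐ[P] fun ω => ∫ y, f y ∂(Q (Xs n ω))

/-- The combinatorial coefficient `B_γ(u,q)`. -/
def Bcoef (γ : ℝ) (u q : ℕ) : ℝ :=
  ((2 * q).factorial : ℝ) / (u.factorial : ℝ) *
    ∑ k ∈ Finset.univ.filter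
        (fun k : Fin u → Fin (2 * q + 1) =>
          (∀ i, 2 ≤ (k i : ℕ)) ∧ ∑ i, (k i : ℕ) = 2 * q),
      ∏ i, ((k i : ℕ).factorial : ℝ) ^ (γ + 2)

/-- The `2q`-th moment `(2q)!/(q! 2^q)` of the standard Gaussian. -/
def gaussMoment (q : ℕ) : ℝ := ((2 * q).factorial : ℝ) / ((q.factorial : ℝ) * 2 ^ q)

/-!
By Cauchy–Schwarz, `‖μ - ν‖_{V^{1/2}} ≤ (2 ‖μ - ν‖_V)^{1/2}` for probability measures, so geometric
ergodicity at rate `ρ` in the `V`-norm yields geometric ergodicity at rate `ρ^{1/2}` in the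
`V^{1/2}`-norm. The joint law of `(X_i, X_{i+k})` being `π ⊗ Q^k`, integrating `ḡ · Q^k ḡ` against
`π` bounds the covariance by `2 c^{1/2} ρ^{k/2} π(V) ‖ḡ‖²`. Summing over pairs of indices,
`Var_π(S_n) ≤ 4 n c^{1/2} (1 - ρ^{1/2})⁻¹ π(V) ‖ḡ‖²`. Finally `log x ≤ x - 1` at `x = ρ^{-1/2}`
gives `(1 - ρ^{1/2})⁻¹ ≤ 2 ρ^{-1/2} (log (1/ρ))⁻¹`, and `8 ≤ 5 e^{1/2} ≤ 5 π(V)^{1/2}`.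
-/

section WeightedNorms

variable {Y : Type*} {U h : Y → ℝ}

lemma vnorm_nonneg (hU : ∀ y, 0 ≤ U y) : 0 ≤ vnorm U h :=
  Real.iSup_nonneg fun y => div_nonneg (abs_nonneg _) (hU y)

variable [MeasurableSpace Y]

lemma MemL.abs_le (hh : MemL U h) {y : Y} (hy : 0 < U y) : |h y| ≤ vnorm U h * U y :=
  (div_le_iff₀ hy).1 (le_ciSup hh.bdd y)

lemma MemL.memLp (hh : MemL U h) (hU : ∀ y, 0 < U y) {μ : Measure Y} {p : ℝ≥0∞}
    (hUp : MemLp U p μ) : MemLp h p μ :=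
  hUp.of_le_mul hh.meas.aestronglyMeasurable <| ae_of_all _ fun y => by
    simpa [abs_of_pos (hU y)] using hh.abs_le (hU y)

end WeightedNorms

section SquareRoot

variable {Y : Type*} [MeasurableSpace Y] {μ : Measure Y} {V h : Y → ℝ}

lemma memLp_two_sqrt (hV : ∀ y, 0 ≤ V y) (hVμ : Integrable V μ) :
    MemLp (fun y => √(V y)) 2 μ := by
  rw [memLp_two_iff_integrable_sq (Real.continuous_sqrt.comp_aestronglyMeasurable hVμ.1)]
  simpa only [Real.sq_sqrt (hV _)] using hVμ

lemma MemL.memLp_two (hh : MemL (fun y => √(V y)) h) (hV : ∀ y, 0 < V y) (hVμ : Integrable V μ) :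
    MemLp h 2 μ :=
  hh.memLp (fun y => Real.sqrt_pos.2 (hV y)) (memLp_two_sqrt (fun y => (hV y).le) hVμ)

lemma integral_sqrt_le [IsFiniteMeasure μ] (hV : ∀ y, 0 ≤ V y) (hVμ : Integrable V μ) :
    ∫ y, √(V y) ∂μ ≤ √(μ.real Set.univ * ∫ y, V y ∂μ) := by
  have holder := integral_mul_le_Lp_mul_Lq_of_nonneg (f := fun _ => (1 : ℝ))
    Real.HolderConjugate.two_two (ae_of_all _ fun _ => zero_le_one)
    (ae_of_all _ fun y => Real.sqrt_nonneg (V y)) (memLp_const 1)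
    (by simpa using memLp_two_sqrt hV hVμ)
  rw [Real.sqrt_mul measureReal_nonneg, Real.sqrt_eq_rpow (μ.real _),
    Real.sqrt_eq_rpow (∫ y, V y ∂μ)]
  simpa [Real.sq_sqrt (hV _)] using holder

end SquareRoot

section WeightedTotalVariation

variable {Y : Type*} [MeasurableSpace Y] {μ ν : Measure Y} {U V h : Y → ℝ}

lemma measure_add_sub_comm (μ ν : Measure Y) [IsFiniteMeasure μ] [IsFiniteMeasure ν] :
    μ + (ν - μ) = ν + (μ - ν) := by
  ext s hs
  have jordan := congrArg (fun σ : SignedMeasure Y => σ s)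
    (Measure.sub_toSignedMeasure_eq_toSignedMeasure_sub (μ := μ) (ν := ν))
  simp only [Measure.toSignedMeasure_sub_apply hs] at jordan
  rw [← measureReal_eq_measureReal_iff, measureReal_add_apply, measureReal_add_apply]
  linarith

lemma wTV_eq_integral_add (hμ : Integrable U μ) (hν : Integrable U ν) :
    wTV U μ ν = ∫ y, U y ∂((μ - ν) + (ν - μ)) :=
  (integral_add_measure (hμ.mono_measure Measure.sub_le) (hν.mono_measure Measure.sub_le)).symm

lemma abs_integral_sub_integral_le_wTV [IsFiniteMeasure μ] [IsFiniteMeasure ν]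
    (hhμ : Integrable h μ) (hhν : Integrable h ν) :
    |∫ y, h y ∂μ - ∫ y, h y ∂ν| ≤ wTV (fun y => |h y|) μ ν := by
  have hμν : Integrable h (μ - ν) := hhμ.mono_measure Measure.sub_le
  have hνμ : Integrable h (ν - μ) := hhν.mono_measure Measure.sub_le
  have jordan : ∫ y, h y ∂μ - ∫ y, h y ∂ν = ∫ y, h y ∂(μ - ν) - ∫ y, h y ∂(ν - μ) := by
    have := congrArg (fun σ => ∫ y, h y ∂σ) (measure_add_sub_comm μ ν)
    rw [integral_add_measure hhμ hνμ, integral_add_measure hhν hμν] at this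
    linarith
  rw [jordan]
  exact (abs_sub _ _).trans (add_le_add abs_integral_le_integral_abs abs_integral_le_integral_abs)

lemma MemL.wTV_abs_le (hh : MemL U h) (hU : ∀ y, 0 < U y)
    (hμ : Integrable U μ) (hν : Integrable U ν) :
    wTV (fun y => |h y|) μ ν ≤ vnorm U h * wTV U μ ν := by
  have bound {σ : Measure Y} (hσ : Integrable U σ) :
      ∫ y, |h y| ∂σ ≤ vnorm U h * ∫ y, U y ∂σ := by
    rw [← integral_const_mul]
    exact integral_mono_of_nonneg (ae_of_all _ fun _ => abs_nonneg _) (hσ.const_mul _)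
      (ae_of_all _ fun y => hh.abs_le (hU y))
  rw [wTV, wTV, mul_add]
  exact add_le_add (bound (hμ.mono_measure Measure.sub_le)) (bound (hν.mono_measure Measure.sub_le))

lemma wTV_sqrt_le [IsProbabilityMeasure μ] [IsProbabilityMeasure ν] (hV : ∀ y, 0 ≤ V y)
    (hμ : Integrable V μ) (hν : Integrable V ν) :
    wTV (fun y => √(V y)) μ ν ≤ √(2 * wTV V μ ν) := by
  have mass_le : ((μ - ν) + (ν - μ)).real Set.univ ≤ 2 := by
    have hμν : (μ - ν).real Set.univ ≤ 1 := probReal_univ (μ := μ) ▸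
      ENNReal.toReal_mono (measure_ne_top _ _) (Measure.sub_le Set.univ)
    have hνμ : (ν - μ).real Set.univ ≤ 1 := probReal_univ (μ := ν) ▸
      ENNReal.toReal_mono (measure_ne_top _ _) (Measure.sub_le Set.univ)
    rw [measureReal_add_apply]
    linarith
  rw [wTV_eq_integral_add ((memLp_two_sqrt hV hμ).integrable one_le_two)
    ((memLp_two_sqrt hV hν).integrable one_le_two), wTV_eq_integral_add hμ hν]
  refine (integral_sqrt_le hV <| (hμ.mono_measure Measure.sub_le).add_measure
    (hν.mono_measure Measure.sub_le)).trans ?_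
  gcongr
  exact integral_nonneg hV

lemma MemL.abs_integral_sub_integral_le [IsProbabilityMeasure μ] [IsProbabilityMeasure ν]
    (hh : MemL (fun y => √(V y)) h) (hV : ∀ y, 0 < V y)
    (hμ : Integrable V μ) (hν : Integrable V ν) :
    |∫ y, h y ∂μ - ∫ y, h y ∂ν| ≤ vnorm (fun y => √(V y)) h * √(2 * wTV V μ ν) := by
  have hV0 : ∀ y, 0 ≤ V y := fun y => (hV y).le
  calc |∫ y, h y ∂μ - ∫ y, h y ∂ν|
      ≤ wTV (fun y => |h y|) μ ν :=
        abs_integral_sub_integral_le_wTV ((hh.memLp_two hV hμ).integrable one_le_two)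
          ((hh.memLp_two hV hν).integrable one_le_two)
    _ ≤ vnorm (fun y => √(V y)) h * wTV (fun y => √(V y)) μ ν :=
        hh.wTV_abs_le (fun y => Real.sqrt_pos.2 (hV y))
          ((memLp_two_sqrt hV0 hμ).integrable one_le_two)
          ((memLp_two_sqrt hV0 hν).integrable one_le_two)
    _ ≤ vnorm (fun y => √(V y)) h * √(2 * wTV V μ ν) :=
        mul_le_mul_of_nonneg_left (wTV_sqrt_le hV0 hμ hν)
          (vnorm_nonneg fun _ => Real.sqrt_nonneg _)

end WeightedTotalVariation

section KernelIterates

variable {X : Type*} [MeasurableSpace X] {Q : Kernel X X}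

instance isMarkovKernel_kIter [IsMarkovKernel Q] (k : ℕ) : IsMarkovKernel (kIter Q k) := by
  induction k with
  | zero => unfold kIter; infer_instance
  | succ k ih => unfold kIter; infer_instance

lemma kIter_succ' (Q : Kernel X X) (k : ℕ) : kIter Q (k + 1) = Q ∘ₖ kIter Q k := by
  induction k with
  | zero => simp [kIter]
  | succ k ih => rw [kIter, ih, Kernel.comp_assoc, ← ih, kIter]

lemma invariant_kIter {π : Measure X} (hπ : Kernel.Invariant Q π) (k : ℕ) :
    Kernel.Invariant (kIter Q k) π := by
  induction k with
  | zero => simp [kIter, Kernel.Invariant]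
  | succ k ih => exact ih.comp hπ

lemma ae_integrable_kIter [IsMarkovKernel Q] {π : Measure X} [SFinite π]
    (hπ : Kernel.Invariant Q π) {V : X → ℝ} (hV : Integrable V π) (k : ℕ) :
    ∀ᵐ x ∂π, Integrable V (kIter Q k x) := by
  rw [← (invariant_kIter hπ k).def] at hV
  exact ((Measure.integrable_comp_iff hV.aestronglyMeasurable).1 hV).1

end KernelIterates

section MarkovChain

variable {X Ω : Type*} [MeasurableSpace X] [mΩ : MeasurableSpace Ω] {P : Measure Ω}
  [IsFiniteMeasure P] {Xs : ℕ → Ω → X} {ξ : Measure X} {Q : Kernel X X} [IsMarkovKernel Q]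

lemma IsMarkovChain.measure_preimage_inter_preimage_succ (hX : IsMarkovChain P Xs ξ Q)
    {i n : ℕ} (hin : i ≤ n) {A B : Set X} (hA : MeasurableSet A) (hB : MeasurableSet B) :
    P (Xs i ⁻¹' A ∩ Xs (n + 1) ⁻¹' B) = ∫⁻ ω in Xs i ⁻¹' A, Q (Xs n ω) B ∂P := by
  have past_le : ⨆ j ∈ Finset.range (n + 1), MeasurableSpace.comap (Xs j) inferInstance ≤ mΩ :=
    iSup₂_le fun j _ => (hX.meas j).comap_le
  have mem_past : MeasurableSet[⨆ j ∈ Finset.range (n + 1),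
      MeasurableSpace.comap (Xs j) inferInstance] (Xs i ⁻¹' A) :=
    le_iSup₂ (f := fun j (_ : j ∈ Finset.range (n + 1)) =>
      MeasurableSpace.comap (Xs j) inferInstance) i
      (Finset.mem_range.2 (Nat.lt_succ_of_le hin)) _ ⟨A, hA, rfl⟩
  have hB' : MeasurableSet (Xs (n + 1) ⁻¹' B) := hX.meas (n + 1) hB
  have markov : P[(Xs (n + 1) ⁻¹' B).indicator (1 : Ω → ℝ) |
      ⨆ j ∈ Finset.range (n + 1), MeasurableSpace.comap (Xs j) inferInstance]
        =ᵐ[P] fun ω => (Q (Xs n ω)).real B := by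
    simpa only [integral_indicator_one hB] using! hX.markov n (B.indicator 1)
      (measurable_one.indicator hB) fun x => by by_cases hx : x ∈ B <;> simp [hx]
  have real_eq : ∫ ω in Xs i ⁻¹' A, (Q (Xs n ω)).real B ∂P =
      P.real (Xs i ⁻¹' A ∩ Xs (n + 1) ⁻¹' B) := by
    rw [← integral_congr_ae (ae_restrict_of_ae markov), setIntegral_condExp past_le
      ((integrable_const 1).indicator hB') mem_past, setIntegral_indicator hB']
    simp
  have meas_transition : Measurable fun ω => Q (Xs n ω) B :=
    (Kernel.measurable_coe Q hB).comp (hX.meas n)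
  have lintegral_ne_top : ∫⁻ ω in Xs i ⁻¹' A, Q (Xs n ω) B ∂P ≠ ∞ :=
    ((lintegral_mono fun _ => prob_le_one).trans_lt (by simp)).ne
  rw [← ENNReal.toReal_eq_toReal_iff' (measure_ne_top _ _) lintegral_ne_top,
    ← integral_toReal meas_transition.aemeasurable (ae_of_all _ fun _ => measure_lt_top _ _)]
  exact real_eq.symm

lemma IsMarkovChain.map_prodMk_succ (hX : IsMarkovChain P Xs ξ Q) {i n : ℕ} (hin : i ≤ n) :
    P.map (fun ω => (Xs i ω, Xs (n + 1) ω)) =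
      (Kernel.id ∥ₖ Q) ∘ₘ P.map (fun ω => (Xs i ω, Xs n ω)) := by
  have meas_pair : ∀ j, Measurable fun ω => (Xs i ω, Xs j ω) :=
    fun j => (hX.meas i).prodMk (hX.meas j)
  refine Measure.ext_prod fun {A B} hA hB => ?_
  have hAB := hA.prod hB
  rw [Measure.map_apply (meas_pair _) hAB, Measure.bind_apply hAB (Kernel.aemeasurable _),
    lintegral_map (Kernel.measurable_coe _ hAB) (meas_pair _), Set.mk_preimage_prod,
    hX.measure_preimage_inter_preimage_succ hin hA hB, ← lintegral_indicator (hX.meas i hA)]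
  refine lintegral_congr fun ω => ?_
  rw [Kernel.parallelComp_apply, Measure.prod_prod, Kernel.id_apply, Measure.dirac_apply' _ hA]
  by_cases hω : Xs i ω ∈ A <;> simp [hω]

lemma IsMarkovChain.map_prodMk_add (hX : IsMarkovChain P Xs ξ Q) (i k : ℕ) :
    P.map (fun ω => (Xs i ω, Xs (i + k) ω)) = P.map (Xs i) ⊗ₘ kIter Q k := by
  induction k with
  | zero =>
    rw [kIter, Measure.compProd_id, Measure.map_map (by fun_prop) (hX.meas i)]
    rfl
  | succ k ih =>
    rw [← add_assoc, hX.map_prodMk_succ (Nat.le_add_right i k), ih,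
      Measure.parallelComp_comp_compProd, kIter_succ']

lemma IsMarkovChain.measurePreserving (hX : IsMarkovChain P Xs ξ Q) (hξ : Kernel.Invariant Q ξ)
    (k : ℕ) : MeasurePreserving (Xs k) P ξ := by
  refine ⟨hX.meas k, ?_⟩
  have hsnd := congrArg Measure.snd (hX.map_prodMk_add 0 k)
  have : SFinite ξ := hX.init ▸ inferInstance
  rwa [hX.init, Measure.snd_compProd, (invariant_kIter hξ k).def,
    Measure.snd_map_prodMk (hX.meas 0), zero_add] at hsnd

lemma IsMarkovChain.measurePreserving_prodMk (hX : IsMarkovChain P Xs ξ Q)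
    (hξ : Kernel.Invariant Q ξ) (i k : ℕ) :
    MeasurePreserving (fun ω => (Xs i ω, Xs (i + k) ω)) P (ξ ⊗ₘ kIter Q k) :=
  ⟨(hX.meas i).prodMk (hX.meas _), by
    rw [hX.map_prodMk_add, (hX.measurePreserving hξ i).map_eq]⟩

lemma IsMarkovChain.integral_mul (hX : IsMarkovChain P Xs ξ Q) (hξ : Kernel.Invariant Q ξ)
    {f g : X → ℝ} (hf : MemLp f 2 ξ) (hg : MemLp g 2 ξ) (i k : ℕ) :
    ∫ ω, f (Xs i ω) * g (Xs (i + k) ω) ∂P = ∫ x, f x * ∫ y, g y ∂(kIter Q k x) ∂ξ := by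
  have : IsFiniteMeasure ξ := hX.init ▸ inferInstance
  have joint := hX.measurePreserving_prodMk hξ i k
  have fst_preserving : MeasurePreserving Prod.fst (ξ ⊗ₘ kIter Q k) ξ :=
    ⟨measurable_fst, Measure.fst_compProd ξ _⟩
  have snd_preserving : MeasurePreserving Prod.snd (ξ ⊗ₘ kIter Q k) ξ :=
    ⟨measurable_snd, (Measure.snd_compProd _ _).trans (invariant_kIter hξ k)⟩
  have hfg : Integrable (fun z : X × X => f z.1 * g z.2) (ξ ⊗ₘ kIter Q k) :=
    (hf.comp_measurePreserving fst_preserving).integrable_mul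
      (hg.comp_measurePreserving snd_preserving)
  calc ∫ ω, f (Xs i ω) * g (Xs (i + k) ω) ∂P
      = ∫ z, f z.1 * g z.2 ∂(ξ ⊗ₘ kIter Q k) := by
        rw [← joint.map_eq] at hfg ⊢
        rw [integral_map joint.aemeasurable hfg.aestronglyMeasurable]
    _ = ∫ x, f x * ∫ y, g y ∂(kIter Q k x) ∂ξ := by
        simp only [Measure.integral_compProd hfg, integral_const_mul]

end MarkovChain

section GeometricErgodicity

variable {X Ω : Type*} [MeasurableSpace X] [MeasurableSpace Ω] {P : Measure Ω}
  [IsFiniteMeasure P] {Xs : ℕ → Ω → X} {Q : Kernel X X} {V h : X → ℝ}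
  {π : Measure X} {c ρ : ℝ}

/-- `V`-geometric ergodicity with constants `c` and `ρ`, for deterministic starting
points: `‖Q ^ k (x, ·) - π‖_V ≤ c (V x + π(V)) ρ ^ k`. -/
def GeometricallyErgodic (Q : Kernel X X) (V : X → ℝ) (π : Measure X) (c ρ : ℝ) : Prop :=
  ∀ (x : X) (k : ℕ), wTV V (kIter Q k x) π ≤ c * (V x + ∫ y, V y ∂π) * ρ ^ k

lemma geometricallyErgodic_of_forall_isProbabilityMeasure (hV : Measurable V)
    (herg : ∀ ξ : Measure X, IsProbabilityMeasure ξ → Integrable V ξ → ∀ k : ℕ,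
      wTV V (ξ.bind (fun x => kIter Q k x)) π ≤
        c * ((∫ x, V x ∂ξ) + ∫ x, V x ∂π) * ρ ^ k) :
    GeometricallyErgodic Q V π c ρ := fun x k => by
  have := herg (Measure.dirac x) inferInstance
    (integrable_dirac' hV.stronglyMeasurable enorm_lt_top) k
  rwa [Measure.dirac_bind (kIter Q k).measurable, integral_dirac' _ _ hV.stronglyMeasurable]
    at this

variable [IsMarkovKernel Q] [IsProbabilityMeasure π]

lemma GeometricallyErgodic.abs_mul_integral_kIter_le (herg : GeometricallyErgodic Q V π c ρ)
    (hV : ∀ x, 0 < V x) (hVπ : Integrable V π) (hρ : 0 ≤ ρ)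
    (hh : MemL (fun x => √(V x)) h) (hπh : ∫ x, h x ∂π = 0) {x : X} {k : ℕ}
    (hx : Integrable V (kIter Q k x)) :
    |h x * ∫ y, h y ∂(kIter Q k x)| ≤
      vnorm (fun x => √(V x)) h ^ 2 * √c * √ρ ^ k * ((3 * V x + ∫ y, V y ∂π) / 2) := by
  set N := vnorm (fun x => √(V x)) h
  set v := ∫ y, V y ∂π
  have hN : 0 ≤ N := vnorm_nonneg fun _ => Real.sqrt_nonneg _
  have hv : 0 ≤ v := integral_nonneg fun y => (hV y).le
  have hVx := hV x
  have iterate_le : |∫ y, h y ∂(kIter Q k x)| ≤ N * √(2 * (c * (V x + v) * ρ ^ k)) := by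
    have := hh.abs_integral_sub_integral_le hV hx hVπ
    rw [hπh, sub_zero] at this
    exact this.trans (by gcongr; exact herg x k)
  have amgm : √(V x * (2 * (V x + v))) ≤ (3 * V x + v) / 2 :=
    Real.sqrt_le_iff.2 ⟨by positivity, by nlinarith [sq_nonneg (V x - v)]⟩
  have sqrt_pow : √(ρ ^ k) = √ρ ^ k := by
    rw [Real.sqrt_eq_iff_eq_sq (by positivity) (by positivity), pow_right_comm, Real.sq_sqrt hρ]
  calc |h x * ∫ y, h y ∂(kIter Q k x)|
      ≤ (N * √(V x)) * (N * √(2 * (c * (V x + v) * ρ ^ k))) := by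
        rw [abs_mul]
        exact mul_le_mul (hh.abs_le (Real.sqrt_pos.2 hVx)) iterate_le (abs_nonneg _)
          (by positivity)
    _ = N ^ 2 * √c * √ρ ^ k * √(V x * (2 * (V x + v))) := by
        rw [show 2 * (c * (V x + v) * ρ ^ k) = c * (ρ ^ k * (2 * (V x + v))) by ring,
          Real.sqrt_mul' c (by positivity), Real.sqrt_mul (by positivity), sqrt_pow,
          Real.sqrt_mul hVx.le]
        ring
    _ ≤ N ^ 2 * √c * √ρ ^ k * ((3 * V x + v) / 2) := by gcongr

lemma IsMarkovChain.integral_mul_add_le (hX : IsMarkovChain P Xs π Q)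
    (hπ : Kernel.Invariant Q π) (herg : GeometricallyErgodic Q V π c ρ)
    (hV : ∀ x, 0 < V x) (hVπ : Integrable V π) (hρ : 0 ≤ ρ)
    (hh : MemL (fun x => √(V x)) h) (hπh : ∫ x, h x ∂π = 0) (i k : ℕ) :
    ∫ ω, h (Xs i ω) * h (Xs (i + k) ω) ∂P ≤
      2 * √c * (∫ x, V x ∂π) * vnorm (fun x => √(V x)) h ^ 2 * √ρ ^ k := by
  have hh2 : MemLp h 2 π := hh.memLp_two hV hVπ
  have h3V : Integrable (fun x => 3 * V x + ∫ y, V y ∂π) π :=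
    (hVπ.const_mul 3).add (integrable_const _)
  rw [hX.integral_mul hπ hh2 hh2]
  calc ∫ x, h x * ∫ y, h y ∂(kIter Q k x) ∂π
      ≤ ∫ x, vnorm (fun x => √(V x)) h ^ 2 * √c * √ρ ^ k * ((3 * V x + ∫ y, V y ∂π) / 2) ∂π :=
        (Real.le_norm_self _).trans <|
          norm_integral_le_of_norm_le ((h3V.div_const 2).const_mul _) <|
            (ae_integrable_kIter hπ hVπ k).mono fun x hx =>
              herg.abs_mul_integral_kIter_le hV hVπ hρ hh hπh hx
    _ = 2 * √c * (∫ x, V x ∂π) * vnorm (fun x => √(V x)) h ^ 2 * √ρ ^ k := by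
        rw [integral_const_mul, integral_div, integral_add (hVπ.const_mul 3) (integrable_const _),
          integral_const_mul, integral_const, probReal_univ, one_smul]
        ring

end GeometricErgodicity

section GeometricCorrelations

lemma sum_pow_le_inv_one_sub_of_injOn {ι : Type*} {s : Finset ι} {f : ι → ℕ}
    (hf : Set.InjOn f s) {r : ℝ} (hr0 : 0 ≤ r) (hr1 : r < 1) :
    ∑ j ∈ s, r ^ f j ≤ (1 - r)⁻¹ := by
  rw [← Finset.sum_image (f := fun k => r ^ k) hf, ← tsum_geometric_of_lt_one hr0 hr1]
  exact (summable_geometric_of_lt_one hr0 hr1).sum_le_tsum _ fun _ _ => pow_nonneg hr0 _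

lemma sum_pow_dist_le (s : Finset ℕ) (i : ℕ) {r : ℝ} (hr0 : 0 ≤ r) (hr1 : r < 1) :
    ∑ j ∈ s, r ^ Nat.dist i j ≤ 2 * (1 - r)⁻¹ := by
  rw [← Finset.sum_filter_add_sum_filter_not s (· ≤ i), two_mul]
  refine add_le_add (sum_pow_le_inv_one_sub_of_injOn ?_ hr0 hr1)
    (sum_pow_le_inv_one_sub_of_injOn ?_ hr0 hr1) <;>
  · intro j hj l hl h
    simp only [Finset.coe_filter, Set.mem_ofPred_eq, Nat.dist] at hj hl h
    omega

lemma integral_sq_sum_le_of_integral_mul_le {Ω : Type*} [MeasurableSpace Ω] {P : Measure Ω}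
    {Y : ℕ → Ω → ℝ} {K r : ℝ} (hY : ∀ i, MemLp (Y i) 2 P) (hr0 : 0 ≤ r) (hr1 : r < 1)
    (hcov : ∀ i k, ∫ ω, Y i ω * Y (i + k) ω ∂P ≤ K * r ^ k) (s : Finset ℕ) :
    ∫ ω, (∑ i ∈ s, Y i ω) ^ 2 ∂P ≤ #s * (2 * K * (1 - r)⁻¹) := by
  have hK : 0 ≤ K := by
    simpa using (integral_nonneg fun ω => mul_self_nonneg (Y 0 ω)).trans (hcov 0 0)
  have hcov_dist : ∀ i j, ∫ ω, Y i ω * Y j ω ∂P ≤ K * r ^ Nat.dist i j := by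
    intro i j
    wlog hij : i ≤ j generalizing i j
    · simpa only [mul_comm, Nat.dist_comm] using this j i (le_of_not_ge hij)
    · simpa [Nat.dist_eq_sub_of_le hij, Nat.add_sub_cancel' hij] using hcov i (j - i)
  calc ∫ ω, (∑ i ∈ s, Y i ω) ^ 2 ∂P
      = ∑ i ∈ s, ∑ j ∈ s, ∫ ω, Y i ω * Y j ω ∂P := by
        have hprod : ∀ i j, Integrable (fun ω => Y i ω * Y j ω) P :=
          fun i j => (hY i).integrable_mul (hY j)
        simp only [sq, Finset.sum_mul_sum]
        rw [integral_finsetSum _ fun i _ => integrable_finsetSum _ fun j _ => hprod i j]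
        exact Finset.sum_congr rfl fun i _ => integral_finsetSum _ fun j _ => hprod i j
    _ ≤ ∑ i ∈ s, K * ∑ j ∈ s, r ^ Nat.dist i j := by
        simp only [Finset.mul_sum]
        gcongr
        exact hcov_dist _ _
    _ ≤ ∑ _i ∈ s, K * (2 * (1 - r)⁻¹) := by
        gcongr
        exact sum_pow_dist_le s _ hr0 hr1
    _ = #s * (2 * K * (1 - r)⁻¹) := by
        rw [Finset.sum_const, nsmul_eq_mul]
        ring

end GeometricCorrelations

lemma inv_one_sub_sqrt_le {ρ : ℝ} (hρ0 : 0 < ρ) (hρ1 : ρ < 1) :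
    (1 - √ρ)⁻¹ ≤ 2 * (√ρ)⁻¹ * (Real.log (1 / ρ))⁻¹ := by
  have hr0 : 0 < √ρ := Real.sqrt_pos.2 hρ0
  have log_pos : 0 < Real.log (1 / ρ) := Real.log_pos (by rwa [lt_div_iff₀ hρ0, one_mul])
  have log_eq : Real.log (1 / ρ) = 2 * Real.log (√ρ)⁻¹ := by
    rw [one_div, Real.log_inv, Real.log_inv, Real.log_sqrt hρ0.le]
    ring
  have log_le : √ρ * Real.log (1 / ρ) ≤ 2 * (1 - √ρ) := by
    have := Real.log_le_sub_one_of_pos (inv_pos.2 hr0)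
    calc √ρ * Real.log (1 / ρ) ≤ √ρ * (2 * ((√ρ)⁻¹ - 1)) := by rw [log_eq]; gcongr
      _ = 2 * (1 - √ρ) := by field_simp
  calc (1 - √ρ)⁻¹ = 2 * (2 * (1 - √ρ))⁻¹ := by rw [mul_inv]; ring
    _ ≤ 2 * (√ρ * Real.log (1 / ρ))⁻¹ := by gcongr
    _ = 2 * (√ρ)⁻¹ * (Real.log (1 / ρ))⁻¹ := by rw [mul_inv, mul_assoc]

lemma eight_mul_le_five_mul_rpow {v : ℝ} (hv : Real.exp 1 ≤ v) :
    8 * v ≤ 5 * v ^ ((3 : ℝ) / 2) := by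
  have hv0 : 0 < v := (Real.exp_pos 1).trans_le hv
  have sqrt_ge : 8 / 5 ≤ √v := Real.le_sqrt_of_sq_le (by linarith [Real.exp_one_gt_d9])
  calc 8 * v = 5 * (8 / 5) * √v ^ 2 := by rw [Real.sq_sqrt hv0.le]; ring
    _ ≤ 5 * √v * √v ^ 2 := by gcongr
    _ = 5 * v ^ ((3 : ℝ) / 2) := by
      rw [Real.rpow_div_two_eq_sqrt _ hv0.le, Real.rpow_ofNat]
      ring

theorem variance_bound_general {X Ω : Type*} [MeasurableSpace X] [MeasurableSpace Ω]
    {Q : Kernel X X} [IsMarkovKernel Q] {V g : X → ℝ} {π : Measure X} [IsProbabilityMeasure π]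
    {c ρ : ℝ} {P : Measure Ω} [IsFiniteMeasure P] {Xs : ℕ → Ω → X}
    (hV : ∀ x, 0 < V x) (hVπ : Integrable V π) (hπ : Kernel.Invariant Q π)
    (hρ0 : 0 < ρ) (hρ1 : ρ < 1) (herg : GeometricallyErgodic Q V π c ρ)
    (hg : MemL (fun x => V x ^ ((1 : ℝ) / 2)) (fun x => g x - ∫ y, g y ∂π))
    (hX : IsMarkovChain P Xs π Q) (n : ℕ) :
    ∫ ω, (∑ ℓ ∈ Finset.range n, (g (Xs ℓ ω) - ∫ x, g x ∂π)) ^ 2 ∂P ≤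
      n * c ^ ((1 : ℝ) / 2) * ρ ^ (-(1 : ℝ) / 2) * (Real.log (1 / ρ))⁻¹ *
        (8 * ∫ x, V x ∂π) *
        vnorm (fun x => V x ^ ((1 : ℝ) / 2)) (fun x => g x - ∫ y, g y ∂π) ^ 2 := by
  have rpow_neg_half : ρ ^ (-(1 : ℝ) / 2) = (√ρ)⁻¹ := by
    rw [Real.rpow_div_two_eq_sqrt _ hρ0.le, Real.rpow_neg_one]
  simp only [rpow_neg_half, ← Real.sqrt_eq_rpow] at hg ⊢
  set h : X → ℝ := fun x => g x - ∫ y, g y ∂π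
  set K := 2 * √c * (∫ x, V x ∂π) * vnorm (fun x => √(V x)) h ^ 2 with hK
  have hπV : 0 ≤ ∫ x, V x ∂π := integral_nonneg fun x => (hV x).le
  have centered : ∫ x, h x ∂π = 0 := by
    simpa [h, average_eq_integral] using integral_sub_average π g
  have hh2 : MemLp h 2 π := hg.memLp_two hV hVπ
  have hr1 : √ρ < 1 := (Real.sqrt_lt' one_pos).2 (by simpa using hρ1)
  calc ∫ ω, (∑ ℓ ∈ Finset.range n, h (Xs ℓ ω)) ^ 2 ∂P
      ≤ #(Finset.range n) * (2 * K * (1 - √ρ)⁻¹) :=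
        integral_sq_sum_le_of_integral_mul_le
          (fun i => hh2.comp_measurePreserving (hX.measurePreserving hπ i)) (Real.sqrt_nonneg ρ) hr1
          (hX.integral_mul_add_le hπ herg hV hVπ hρ0.le hg centered) _
    _ ≤ n * (2 * K * (2 * (√ρ)⁻¹ * (Real.log (1 / ρ))⁻¹)) := by
        rw [Finset.card_range]
        gcongr
        exact inv_one_sub_sqrt_le hρ0 hρ1
    _ = _ := by rw [hK]; ring

/-- Variance bound for the stationary chain:
`Var_π(S_n) ≤ 5 n c^{1/2} ρ^{-1/2} (log(1/ρ))⁻¹ π(V)^{3/2} ‖ḡ‖_{V^{1/2}}²`. -/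
theorem variance_bound
    {X : Type*} [MeasurableSpace X]
    (Q : ProbabilityTheory.Kernel X X) [ProbabilityTheory.IsMarkovKernel Q]
    (V : X → ℝ) (lam b : ℝ) (m : ℕ) (eps d c ρ : ℝ) (piQ : Measure X)
    [IsProbabilityMeasure piQ]
    -- Assumption A1
    (hV : Measurable V) (hVe : ∀ x, Real.exp 1 ≤ V x)
    (hlam0 : 0 < lam) (hlam1 : lam < 1) (hb : 0 ≤ b)
    (hdrift : ∀ x, ∫ y, V y ∂(Q x) ≤ lam * V x + b)
    -- Assumption A2
    (hm : 1 ≤ m) (heps0 : 0 < eps) (heps1 : eps < 1) (hd : 0 ≤ d)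
    (hsmallcond : lam + 2 * b / (1 + d) < 1)
    (hsmall : ∃ ν : Measure X, IsProbabilityMeasure ν ∧
      ∀ x, V x ≤ d → ∀ A : Set X, MeasurableSet A →
        ENNReal.ofReal eps * ν A ≤ (kIter Q m) x A)
    -- piQ is the unique invariant probability measure, with piQ(V) < ∞
    (hinv : piQ.bind (fun x => Q x) = piQ)
    (huniq : ∀ π' : Measure X, IsProbabilityMeasure π' →
      π'.bind (fun x => Q x) = π' → π' = piQ)
    (hpiV : Integrable V piQ)
    -- geometric ergodicity constants c ≥ 1, ρ ∈ (0,1)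
    (hc : 1 ≤ c) (hρ0 : 0 < ρ) (hρ1 : ρ < 1)
    (herg : ∀ ξ : Measure X, IsProbabilityMeasure ξ → Integrable V ξ → ∀ k : ℕ,
      wTV V (ξ.bind (fun x => (kIter Q k) x)) piQ ≤
        c * ((∫ x, V x ∂ξ) + ∫ x, V x ∂piQ) * ρ ^ k)
    -- the function g, measurable with finite `V^{1/2}`-weighted norm of ḡ
    (g : X → ℝ) (hgmeas : Measurable g)
    (hgbdd : BddAbove (Set.range fun x =>
      |g x - ∫ y, g y ∂piQ| / V x ^ ((1 : ℝ) / 2)))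
    (n : ℕ) (hn : 1 ≤ n)
    -- the stationary canonical chain
    {Ω : Type*} [MeasurableSpace Ω] (P : Measure Ω) [IsProbabilityMeasure P]
    (Xs : ℕ → Ω → X) (hchain : IsMarkovChain P Xs piQ Q) :
    (∫ ω, (∑ ℓ ∈ Finset.range n, (g (Xs ℓ ω) - ∫ x, g x ∂piQ)) ^ 2 ∂P) ≤
      5 * (n : ℝ) * c ^ ((1 : ℝ) / 2) * ρ ^ (-(1 : ℝ) / 2) * (Real.log (1 / ρ))⁻¹ *
        (∫ x, V x ∂piQ) ^ ((3 : ℝ) / 2) *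
        vnorm (fun x => V x ^ ((1 : ℝ) / 2)) (fun x => g x - ∫ y, g y ∂piQ) ^ 2 := by
  have hπV : Real.exp 1 ≤ ∫ x, V x ∂piQ := by
    simpa using integral_mono (integrable_const (Real.exp 1)) hpiV hVe
  have hlog : 0 ≤ Real.log (1 / ρ) := Real.log_nonneg ((one_le_div hρ0).2 hρ1.le)
  refine (variance_bound_general (fun x => (Real.exp_pos 1).trans_le (hVe x)) hpiV hinv hρ0 hρ1
    (geometricallyErgodic_of_forall_isProbabilityMeasure hV herg) ⟨hgmeas.sub_const _, hgbdd⟩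
    hchain n).trans ?_
  calc _ ≤ n * c ^ ((1 : ℝ) / 2) * ρ ^ (-(1 : ℝ) / 2) * (Real.log (1 / ρ))⁻¹ *
        (5 * (∫ x, V x ∂piQ) ^ ((3 : ℝ) / 2)) *
        vnorm (fun x => V x ^ ((1 : ℝ) / 2)) (fun x => g x - ∫ y, g y ∂piQ) ^ 2 := by
        gcongr ?_ * _
        exact mul_le_mul_of_nonneg_left (eight_mul_le_five_mul_rpow hπV) (by positivity)
    _ = _ := by ring
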